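/- (Lemma 2) For every integer k ≥ 1 and every t ∈ ℂ, set F_k(t) = Tr(θ(Θ + tθ²)^{k−1}) and G_k(t) = Tr((Θ + tθ²)^k). Then ∂F_k(t) = Tr(θ²(Θ + tθ²)^{k−1}) and ∂̄F_k(t) − t ∂F_k(t) = G_k(t). -/

import Mathlib

/-- An abstract model of the Dolbeault double complex of `(p,q)`-forms on a complex
manifold: a bigraded associative `ℂ`-algebra `Ω = ⨁ Ω^{p,q}`, graded-commutative with
respect to total degree, with `ℂ`-linear operators `∂` (`pd`) and `∂̄` (`pdb`) of
bidegrees `(1,0)` and `(0,1)`, squaring to zero and anticommuting, satisfying the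
graded Leibniz rule. -/
structure DolbeaultAlgebra (Ω : Type*) [Ring Ω] [Algebra ℂ Ω] where
  /-- the `ℂ`-subspace of elements of bidegree `(p,q)` -/
  deg : ℕ → ℕ → Submodule ℂ Ω
  one_mem : (1 : Ω) ∈ deg 0 0
  mul_mem : ∀ {p q p' q'} {a b : Ω}, a ∈ deg p q → b ∈ deg p' q' →
    a * b ∈ deg (p + p') (q + q')
  gcomm : ∀ {p q p' q'} (a b : Ω), a ∈ deg p q → b ∈ deg p' q' →
    a * b = ((-1 : ℂ) ^ ((p + q) * (p' + q'))) • (b * a)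
  /-- the operator `∂` -/
  pd : Ω →ₗ[ℂ] Ω
  /-- the operator `∂̄` -/
  pdb : Ω →ₗ[ℂ] Ω
  pd_mem : ∀ {p q} {a : Ω}, a ∈ deg p q → pd a ∈ deg (p + 1) q
  pdb_mem : ∀ {p q} {a : Ω}, a ∈ deg p q → pdb a ∈ deg p (q + 1)
  pd_pd : ∀ a : Ω, pd (pd a) = 0
  pdb_pdb : ∀ a : Ω, pdb (pdb a) = 0
  pd_pdb : ∀ a : Ω, pd (pdb a) + pdb (pd a) = 0
  pd_leibniz : ∀ {p q} (a b : Ω), a ∈ deg p q →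
    pd (a * b) = pd a * b + ((-1 : ℂ) ^ (p + q)) • (a * pd b)
  pdb_leibniz : ∀ {p q} (a b : Ω), a ∈ deg p q →
    pdb (a * b) = pdb a * b + ((-1 : ℂ) ^ (p + q)) • (a * pdb b)

namespace DolbeaultAlgebra

variable {Ω : Type*} [Ring Ω] [Algebra ℂ Ω] {r : ℕ}

/-- the entrywise extension of `∂` to `r × r` matrices over `Ω` -/
def mpd (A : DolbeaultAlgebra Ω) (M : Matrix (Fin r) (Fin r) Ω) :
    Matrix (Fin r) (Fin r) Ω := M.map A.pd

/-- the entrywise extension of `∂̄` to `r × r` matrices over `Ω` -/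
def mpdb (A : DolbeaultAlgebra Ω) (M : Matrix (Fin r) (Fin r) Ω) :
    Matrix (Fin r) (Fin r) Ω := M.map A.pdb

/-- the assertion that all entries of a matrix lie in `Ω^{p,q}` -/
def MatDeg (A : DolbeaultAlgebra Ω) (p q : ℕ) (M : Matrix (Fin r) (Fin r) Ω) : Prop :=
  ∀ i j, M i j ∈ A.deg p q

end DolbeaultAlgebra

variable {Ω : Type*} [Ring Ω] [Algebra ℂ Ω]

/-!
Put `X = Θ + tθ²`. The structure equation `∂θ = -θ²` gives the Bianchi identity `∂Θ = [Θ, θ]`, so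
both operators act on `X`, hence on its powers, as commutators: `∂Xⁿ = [Xⁿ, θ]` and
`∂̄Xⁿ = [Xⁿ, tθ]`. Therefore `∂(θXⁿ) = -θXⁿθ`, and `∂̄(θXⁿ) - t∂(θXⁿ) = Xⁿ⁺¹` holds already before
taking traces. Since `θ` and `θXⁿ` both have odd degree, graded cyclicity of the trace turns
`-Tr(θXⁿθ)` into `Tr(θ²Xⁿ)`.
-/

section Graded

variable {R E : Type*} [CommRing R] [Ring E] [Algebra R E] {𝒜 : ℕ → Submodule R E}

/-- Graded commutativity (the Koszul sign rule) with respect to a family of submodules `𝒜 m`,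
thought of as the homogeneous elements of degree `m`. -/
def IsGradedCommutative (𝒜 : ℕ → Submodule R E) : Prop :=
  ∀ ⦃m n : ℕ⦄ ⦃a b : E⦄, a ∈ 𝒜 m → b ∈ 𝒜 n → a * b = (-1 : R) ^ (m * n) • (b * a)

/-- Antiderivations: linear maps obeying the Leibniz rule with the sign of an operator of odd
degree. That `D` shifts the degree is not part of the definition. -/
def IsAntiderivation (𝒜 : ℕ → Submodule R E) (D : E →ₗ[R] E) : Prop :=
  ∀ ⦃m : ℕ⦄ ⦃a : E⦄, a ∈ 𝒜 m → ∀ b, D (a * b) = D a * b + (-1 : R) ^ m • (a * D b)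

namespace IsAntiderivation

variable {D : E →ₗ[R] E} {m : ℕ} {a x y : E}

theorem map_mul_of_even (hD : IsAntiderivation 𝒜 D) (hm : Even m) (ha : a ∈ 𝒜 m) (b : E) :
    D (a * b) = D a * b + a * D b := by
  rw [hD ha, hm.neg_one_pow, one_smul]

theorem map_mul_of_odd (hD : IsAntiderivation 𝒜 D) (hm : Odd m) (ha : a ∈ 𝒜 m) (b : E) :
    D (a * b) = D a * b - a * D b := by
  rw [hD ha, hm.neg_one_pow, neg_one_smul, sub_eq_add_neg]

theorem map_mul_self_of_odd (hD : IsAntiderivation 𝒜 D) (hm : Odd m) (ha : a ∈ 𝒜 m) :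
    D (a * a) = ⁅D a, a⁆ := by
  rw [hD.map_mul_of_odd hm ha, Ring.lie_def]

theorem map_one [SetLike.GradedOne 𝒜] (hD : IsAntiderivation 𝒜 D) : D 1 = 0 := by
  simpa using hD (SetLike.GradedOne.one_mem (A := 𝒜)) 1

theorem map_pow_eq_lie [SetLike.GradedOne 𝒜] (hD : IsAntiderivation 𝒜 D) (hm : Even m)
    (hx : x ∈ 𝒜 m) (hDx : D x = ⁅x, y⁆) (k : ℕ) : D (x ^ k) = ⁅x ^ k, y⁆ := by
  induction k with
  | zero => simp [hD.map_one, Ring.lie_def]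
  | succ k ih =>
    rw [pow_succ', hD.map_mul_of_even hm hx, hDx, ih]
    simp only [Ring.lie_def]
    noncomm_ring

end IsAntiderivation

/-- The pencil `Θ + tθ²` spanned by the curvature `Θ = ∂̄θ` of a connection form `θ` and by `θ²`;
the argument `pdb` stands for `∂̄`. -/
def curvaturePencil (pdb : E →ₗ[R] E) (θ : E) (t : R) : E :=
  pdb θ + t • (θ * θ)

section CurvaturePencil

variable {pd pdb : E →ₗ[R] E} {θ : E}

theorem curvaturePencil_mem [SetLike.GradedMul 𝒜] (hθ : θ ∈ 𝒜 1) (hΘ : pdb θ ∈ 𝒜 2) (t : R) :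
    curvaturePencil pdb θ t ∈ 𝒜 2 :=
  add_mem hΘ (Submodule.smul_mem _ t (SetLike.mul_mem_graded hθ hθ))

theorem bianchi_identity (hpdb : IsAntiderivation 𝒜 pdb) (hanti : pd (pdb θ) + pdb (pd θ) = 0)
    (hθ : θ ∈ 𝒜 1) (hpdθ : pd θ = -(θ * θ)) : pd (pdb θ) = ⁅pdb θ, θ⁆ := by
  rwa [hpdθ, map_neg, hpdb.map_mul_self_of_odd odd_one hθ, add_neg_eq_zero] at hanti

theorem pd_curvaturePencil (hpd : IsAntiderivation 𝒜 pd) (hpdb : IsAntiderivation 𝒜 pdb)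
    (hanti : pd (pdb θ) + pdb (pd θ) = 0) (hθ : θ ∈ 𝒜 1) (hpdθ : pd θ = -(θ * θ)) (t : R) :
    pd (curvaturePencil pdb θ t) = ⁅curvaturePencil pdb θ t, θ⁆ := by
  have hpdθθ : pd (θ * θ) = 0 := by
    rw [hpd.map_mul_self_of_odd odd_one hθ, hpdθ, Ring.lie_def]
    noncomm_ring
  rw [curvaturePencil, map_add, map_smul, bianchi_identity hpdb hanti hθ hpdθ, hpdθθ, smul_zero]
  simp only [Ring.lie_def, add_mul, mul_add, smul_mul_assoc, mul_smul_comm, mul_assoc]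
  abel

theorem pdb_curvaturePencil (hpdb : IsAntiderivation 𝒜 pdb) (hsq : pdb (pdb θ) = 0)
    (hθ : θ ∈ 𝒜 1) (t : R) :
    pdb (curvaturePencil pdb θ t) = ⁅curvaturePencil pdb θ t, t • θ⁆ := by
  rw [curvaturePencil, map_add, map_smul, hsq, hpdb.map_mul_self_of_odd odd_one hθ]
  simp only [Ring.lie_def, add_mul, mul_add, smul_mul_assoc, mul_smul_comm, mul_assoc, smul_add,
    smul_sub]
  abel

variable [SetLike.GradedMonoid 𝒜]

theorem pd_mul_curvaturePencil_pow (hpd : IsAntiderivation 𝒜 pd) (hpdb : IsAntiderivation 𝒜 pdb)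
    (hanti : pd (pdb θ) + pdb (pd θ) = 0) (hθ : θ ∈ 𝒜 1) (hΘ : pdb θ ∈ 𝒜 2)
    (hpdθ : pd θ = -(θ * θ)) (t : R) (k : ℕ) :
    pd (θ * curvaturePencil pdb θ t ^ k) = -(θ * curvaturePencil pdb θ t ^ k * θ) := by
  have hpdX := pd_curvaturePencil hpd hpdb hanti hθ hpdθ t
  rw [hpd.map_mul_of_odd odd_one hθ,
    hpd.map_pow_eq_lie even_two (curvaturePencil_mem hθ hΘ t) hpdX, hpdθ, Ring.lie_def]
  noncomm_ring

theorem pdb_mul_curvaturePencil_pow (hpdb : IsAntiderivation 𝒜 pdb) (hsq : pdb (pdb θ) = 0)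
    (hθ : θ ∈ 𝒜 1) (hΘ : pdb θ ∈ 𝒜 2) (t : R) (k : ℕ) :
    pdb (θ * curvaturePencil pdb θ t ^ k) =
      curvaturePencil pdb θ t ^ (k + 1) - t • (θ * curvaturePencil pdb θ t ^ k * θ) := by
  have hpdbX := pdb_curvaturePencil hpdb hsq hθ t
  have hsucc : curvaturePencil pdb θ t ^ (k + 1) =
      pdb θ * curvaturePencil pdb θ t ^ k + t • (θ * θ * curvaturePencil pdb θ t ^ k) := by
    rw [pow_succ', ← smul_mul_assoc, ← add_mul, ← curvaturePencil]
  rw [hpdb.map_mul_of_odd odd_one hθ,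
    hpdb.map_pow_eq_lie even_two (curvaturePencil_mem hθ hΘ t) hpdbX, hsucc, Ring.lie_def]
  simp only [mul_sub, smul_mul_assoc, mul_smul_comm, mul_assoc]
  abel

end CurvaturePencil

section Matrix

variable {n : Type*}

/-- The grading on `n × n` matrices over a graded ring in which a matrix has degree `i` when all
its entries do. -/
def matrixGrading (n : Type*) {ι R E : Type*} [Semiring R] [AddCommMonoid E] [Module R E]
    (𝒜 : ι → Submodule R E) (i : ι) : Submodule R (Matrix n n E) :=
  (𝒜 i).matrix

instance matrixGrading.gradedMonoid {ι : Type*} [AddMonoid ι] [Fintype n] [DecidableEq n]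
    (𝒜 : ι → Submodule R E) [SetLike.GradedMonoid 𝒜] :
    SetLike.GradedMonoid (matrixGrading n 𝒜) where
  one_mem := by
    intro i j
    rw [Matrix.one_apply]
    split_ifs
    exacts [SetLike.GradedOne.one_mem (A := 𝒜), zero_mem (𝒜 0)]
  mul_mem _ _ _ _ hM hN := by
    intro i j
    rw [Matrix.mul_apply]
    exact sum_mem fun l _ => SetLike.mul_mem_graded (A := 𝒜) (hM i l) (hN l j)

theorem IsAntiderivation.mapMatrix [Fintype n] [DecidableEq n] {D : E →ₗ[R] E}
    (hD : IsAntiderivation 𝒜 D) :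
    IsAntiderivation (matrixGrading n 𝒜) (D.mapMatrix (m := n) (n := n)) := by
  intro m M hM N
  ext i j
  simp only [LinearMap.mapMatrix_apply, Matrix.map_apply, Matrix.add_apply, Matrix.smul_apply,
    Matrix.mul_apply, map_sum, Finset.smul_sum, ← Finset.sum_add_distrib]
  exact Finset.sum_congr rfl fun l _ => hD (hM i l) (N l j)

theorem IsGradedCommutative.trace_mul_comm [Fintype n] (h𝒜 : IsGradedCommutative 𝒜) {p q : ℕ}
    {M N : Matrix n n E} (hM : M ∈ matrixGrading n 𝒜 p) (hN : N ∈ matrixGrading n 𝒜 q) :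
    (M * N).trace = (-1 : R) ^ (p * q) • (N * M).trace := by
  simp only [Matrix.trace, Matrix.diag_apply, Matrix.mul_apply, Finset.smul_sum]
  rw [Finset.sum_comm]
  exact Finset.sum_congr rfl fun j _ => Finset.sum_congr rfl fun i _ => h𝒜 (hM i j) (hN j i)

theorem IsGradedCommutative.trace_mul_comm_of_odd [Fintype n] (h𝒜 : IsGradedCommutative 𝒜)
    {p q : ℕ} {M N : Matrix n n E} (hp : Odd p) (hq : Odd q) (hM : M ∈ matrixGrading n 𝒜 p)
    (hN : N ∈ matrixGrading n 𝒜 q) : (M * N).trace = -(N * M).trace := by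
  rw [h𝒜.trace_mul_comm hM hN, (hp.mul hq).neg_one_pow, neg_one_smul]

theorem IsGradedCommutative.trace_mul_pow_mul [Fintype n] [DecidableEq n]
    [SetLike.GradedMonoid 𝒜] (h𝒜 : IsGradedCommutative 𝒜) {p q : ℕ} {M N : Matrix n n E}
    (hp : Odd p) (hq : Even q) (hM : M ∈ matrixGrading n 𝒜 p) (hN : N ∈ matrixGrading n 𝒜 q)
    (k : ℕ) : (M * N ^ k * M).trace = -(M ^ 2 * N ^ k).trace := by
  have hodd : Odd (p + k * q) := hp.add_even (hq.mul_left k)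
  have hMN : M * N ^ k ∈ matrixGrading n 𝒜 (p + k * q) :=
    SetLike.mul_mem_graded hM (SetLike.pow_mem_graded k hN)
  rw [h𝒜.trace_mul_comm_of_odd hodd hp hMN hM, pow_two, mul_assoc]

theorem stmt4_general [Fintype n] [DecidableEq n] [SetLike.GradedMonoid 𝒜]
    (h𝒜 : IsGradedCommutative 𝒜) {pd pdb : E →ₗ[R] E} (hpd : IsAntiderivation 𝒜 pd)
    (hpdb : IsAntiderivation 𝒜 pdb) (hsq : ∀ a, pdb (pdb a) = 0)
    (hanti : ∀ a, pd (pdb a) + pdb (pd a) = 0) {θ Θ : Matrix n n E}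
    (hθ : θ ∈ matrixGrading n 𝒜 1) (hΘ : Θ ∈ matrixGrading n 𝒜 2)
    (hpdθ : pd.mapMatrix θ = -(θ * θ)) (hpdbθ : Θ = pdb.mapMatrix θ) (t : R) (k : ℕ) :
    pd (θ * (Θ + t • (θ * θ)) ^ k).trace = (θ ^ 2 * (Θ + t • (θ * θ)) ^ k).trace ∧
    pdb (θ * (Θ + t • (θ * θ)) ^ k).trace - t • pd (θ * (Θ + t • (θ * θ)) ^ k).trace =
      ((Θ + t • (θ * θ)) ^ (k + 1)).trace := by
  subst hpdbθ
  have hpdF := pd_mul_curvaturePencil_pow hpd.mapMatrix hpdb.mapMatrix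
    (Matrix.ext fun i j => hanti (θ i j)) hθ hΘ hpdθ t k
  have hpdbF := pdb_mul_curvaturePencil_pow hpdb.mapMatrix
    (Matrix.ext fun i j => hsq (θ i j)) hθ hΘ t k
  have hcyc := h𝒜.trace_mul_pow_mul odd_one even_two hθ (curvaturePencil_mem hθ hΘ t) k
  rw [← curvaturePencil]
  generalize curvaturePencil pdb.mapMatrix θ t = X at hpdF hpdbF hcyc ⊢
  have hpd_trace : pd (θ * X ^ k).trace = -(θ * X ^ k * θ).trace := by
    rw [AddMonoidHom.map_trace, ← LinearMap.mapMatrix_apply, hpdF, Matrix.trace_neg]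
  have hpdb_trace :
      pdb (θ * X ^ k).trace = (X ^ (k + 1)).trace - t • (θ * X ^ k * θ).trace := by
    rw [AddMonoidHom.map_trace, ← LinearMap.mapMatrix_apply, hpdbF, Matrix.trace_sub,
      Matrix.trace_smul]
  constructor
  · rw [hpd_trace, hcyc, neg_neg]
  · rw [hpdb_trace, hpd_trace, smul_neg, sub_neg_eq_add, sub_add_cancel]

end Matrix

end Graded

namespace DolbeaultAlgebra

/-- The space `Ωⁿ` of elements of total degree `n`, spanned by the `Ω^{p,q}` with `p + q = n`. -/
def totalDeg (A : DolbeaultAlgebra Ω) (n : ℕ) : Submodule ℂ Ω :=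
  Submodule.span ℂ {a | ∃ p q, p + q = n ∧ a ∈ A.deg p q}

variable (A : DolbeaultAlgebra Ω)

theorem mem_totalDeg {p q n : ℕ} {a : Ω} (ha : a ∈ A.deg p q) (h : p + q = n) :
    a ∈ A.totalDeg n :=
  Submodule.subset_span ⟨p, q, h, ha⟩

instance totalDeg.gradedMonoid : SetLike.GradedMonoid A.totalDeg where
  one_mem := A.mem_totalDeg A.one_mem rfl
  mul_mem _ _ _ _ hx hy := by
    have hxy := Submodule.mul_mem_mul hx hy
    rw [totalDeg, totalDeg, Submodule.span_mul_span] at hxy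
    refine Submodule.span_mono ?_ hxy
    rintro _ ⟨a, ⟨p, q, rfl, ha⟩, b, ⟨p', q', rfl, hb⟩, rfl⟩
    exact ⟨p + p', q + q', add_add_add_comm p p' q q', A.mul_mem ha hb⟩

theorem isGradedCommutative_totalDeg : IsGradedCommutative A.totalDeg := by
  intro m n a b ha hb
  induction ha, hb using Submodule.span_induction₂ with
  | mem_mem a b ha hb =>
    obtain ⟨p, q, rfl, ha⟩ := ha
    obtain ⟨p', q', rfl, hb⟩ := hb
    exact A.gcomm a b ha hb
  | zero_left | zero_right => simp only [zero_mul, mul_zero, smul_zero]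
  | add_left _ _ _ _ _ _ h₁ h₂ | add_right _ _ _ _ _ _ h₁ h₂ =>
    simp only [add_mul, mul_add, h₁, h₂, smul_add]
  | smul_left c _ _ _ _ h | smul_right c _ _ _ _ h =>
    rw [smul_mul_assoc, mul_smul_comm, h, smul_comm]

theorem isAntiderivation_totalDeg {D : Ω →ₗ[ℂ] Ω}
    (hD : ∀ {p q} (a b : Ω), a ∈ A.deg p q →
      D (a * b) = D a * b + (-1 : ℂ) ^ (p + q) • (a * D b)) :
    IsAntiderivation A.totalDeg D := by
  intro m a ha b
  induction ha using Submodule.span_induction with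
  | mem a ha =>
    obtain ⟨p, q, rfl, ha⟩ := ha
    exact hD a b ha
  | zero => simp only [zero_mul, map_zero, smul_zero, add_zero]
  | add _ _ _ _ h₁ h₂ =>
    simp only [add_mul, map_add, h₁, h₂, smul_add]
    abel
  | smul c _ _ h => simp only [smul_mul_assoc, map_smul, h, smul_add, smul_comm c]

end DolbeaultAlgebra

/-- (Lemma 2) For every `k ≥ 1` and `t ∈ ℂ`, with `F k t = Tr(θ(Θ + tθ²)^(k-1))` and
`G k t = Tr((Θ + tθ²)ᵏ)`: `∂(F k t) = Tr(θ²(Θ + tθ²)^(k-1))` and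
`∂̄(F k t) - t∂(F k t) = G k t`. -/
theorem stmt4
    (A : DolbeaultAlgebra Ω) (r : ℕ) (hr : 1 ≤ r)
    (θ Θ : Matrix (Fin r) (Fin r) Ω)
    (hθdeg : A.MatDeg 1 0 θ) (hθpd : A.mpd θ = -(θ * θ)) (hΘ : Θ = A.mpdb θ)
    (t : ℂ) (k : ℕ) (hk : 1 ≤ k) :
    A.pd (Matrix.trace (θ * (Θ + t • (θ * θ)) ^ (k - 1))) =
      Matrix.trace (θ ^ 2 * (Θ + t • (θ * θ)) ^ (k - 1)) ∧
    A.pdb (Matrix.trace (θ * (Θ + t • (θ * θ)) ^ (k - 1)))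
      - t • A.pd (Matrix.trace (θ * (Θ + t • (θ * θ)) ^ (k - 1))) =
      Matrix.trace ((Θ + t • (θ * θ)) ^ k) := by
  obtain ⟨n, rfl⟩ := Nat.exists_eq_add_of_le' hk
  have hθ : θ ∈ matrixGrading (Fin r) A.totalDeg 1 := fun i j => A.mem_totalDeg (hθdeg i j) rfl
  have hΘ_mem : Θ ∈ matrixGrading (Fin r) A.totalDeg 2 :=
    hΘ ▸ fun i j => A.mem_totalDeg (A.pdb_mem (hθdeg i j)) rfl
  exact stmt4_general A.isGradedCommutative_totalDeg (A.isAntiderivation_totalDeg A.pd_leibniz)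
    (A.isAntiderivation_totalDeg A.pdb_leibniz) A.pdb_pdb A.pd_pdb hθ hΘ_mem hθpd hΘ t n
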